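/- Let n ≥ 2 and 1 ≤ d ≤ n−1 be integers and let w be a weight such that there exist c_w, C_w > 0 with c_w² ≤ W_k ≤ C_w² for every k ∈ ℤ^n. Let r, t, s, δ ∈ ℝ with 2s + t ≥ r, s > 0 and 0 < δ < 2s, let f ∈ H^{r+δ}(𝕋^n), let ε > 0, let g ∈ L_t^{2,2}(X_{d,n};w) with ‖g‖_{L_t^{2,2}(X_{d,n};w)} ≤ ε, and let 0 < α ≤ c_w²(2s/δ − 1). Then ‖P_{w,s}^α R_d^*(R_d f + g) − f‖_{H^r(𝕋^n)} ≤ α^{δ/(2s)} c_w^{−δ/s} C(δ/(2s)) ‖f‖_{H^{r+δ}(𝕋^n)} + C_w³ c_w^{−2} ε/α, where C(x) = x(x^{−1} − 1)^{1−x}. -/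

import Mathlib

/-!
Setting: the flat torus 𝕋ⁿ = ℝⁿ/ℤⁿ and its d-plane Radon transform.

* Periodic distributions 𝒯' are modeled, via the structure theorem, by their
  Fourier coefficient sequences `ℤⁿ → ℂ` of at most polynomial growth (`PDist`).
* `Gr d n` is the Grassmannian of d-dimensional subspaces of ℚⁿ.
* The d-plane Radon transform is encoded on the Fourier side by the Fourier
  slice identity `(R_{d,A} f)^(k) = f̂(k)` if `k ⊥ A` and `0` otherwise (`radonC`).
* `hsNormSq s c = Σ_k ⟨k⟩^{2s} |c k|²` is the squared H^s(𝕋ⁿ) norm (in ℝ≥0∞),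
  `dataNormSq s w g = Σ_A Σ_k ⟨k⟩^{2s} w(k,A)² |ĝ(k,A)|²` is the squared
  L_s^{2,2}(X_{d,n}; w) norm, `hsNorm`/`dataNorm` are their square roots.
* `Wk w k = Σ_{A ∈ Ω_k} w(k,A)²` and `radonStar` is the adjoint
  `(R_d^* g)^(k) = Σ_{A ∈ Ω_k} w(k,A)² ĝ(k,A)`.
-/

open scoped ENNReal BigOperators
open MeasureTheory Classical Filter

noncomputable section

abbrev Zn (n : ℕ) := Fin n → ℤ
abbrev Tn (n : ℕ) := Fin n → AddCircle (1 : ℝ)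

/-- Japanese bracket ⟨k⟩ = (1+|k|²)^{1/2}. -/
def jap {n : ℕ} (k : Zn n) : ℝ := Real.sqrt (1 + ∑ i, ((k i : ℝ))^2)

/-- Periodic distributions on 𝕋ⁿ, modeled via their Fourier coefficients
(structure theorem: 𝒯' ≅ sequences of at most polynomial growth). -/
structure PDist (n : ℕ) where
  coef : Zn n → ℂ
  growth : ∃ C N : ℝ, 0 < C ∧ ∀ k, ‖coef k‖ ≤ C * jap k ^ N

/-- Grassmannian of d-dimensional subspaces of ℚⁿ. -/
def Gr (d n : ℕ) := {A : Submodule ℚ (Fin n → ℚ) // Module.finrank ℚ A = d}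

/-- `k ⊥ A`. -/
def perp {d n : ℕ} (k : Zn n) (A : Gr d n) : Prop :=
  ∀ v ∈ A.1, ∑ i, (k i : ℚ) * v i = 0

/-- A weight `w : ℤⁿ × Gr(d,n) → (0,∞)` with at most polynomial decay in each
variable `A`. -/
def IsWeight {d n : ℕ} (w : Zn n → Gr d n → ℝ) : Prop :=
  (∀ k A, 0 < w k A) ∧ ∀ A : Gr d n, ∃ C N : ℝ, 0 < C ∧ ∀ k, C * jap k ^ (-N) ≤ w k A

/-- Fourier-slice definition of the d-plane Radon transform `R_{d,A}`
on Fourier coefficient sequences. -/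
def radonC {d n : ℕ} (A : Gr d n) (c : Zn n → ℂ) : Zn n → ℂ :=
  fun k => if perp k A then c k else 0

/-- The d-plane Radon transform `R_{d,A}` on periodic distributions. -/
def radonD {d n : ℕ} (A : Gr d n) (f : PDist n) : PDist n :=
  ⟨radonC A f.coef, by
    obtain ⟨C, N, hC, h⟩ := f.growth
    refine ⟨C, N, hC, fun k => ?_⟩
    by_cases hk : perp k A
    · simpa [radonC, hk] using h k
    · simp only [radonC, hk, if_false, norm_zero]
      have h1 : 0 ≤ jap k ^ N := Real.rpow_nonneg (Real.sqrt_nonneg _) N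
      positivity⟩

/-- Squared H^s(𝕋ⁿ) norm `Σ_k ⟨k⟩^{2s}|c k|²` (possibly infinite). -/
def hsNormSq {n : ℕ} (s : ℝ) (c : Zn n → ℂ) : ℝ≥0∞ :=
  ∑' k : Zn n, ENNReal.ofReal (jap k ^ (2*s) * ‖c k‖^2)

/-- H^s(𝕋ⁿ) norm (possibly infinite). -/
def hsNorm {n : ℕ} (s : ℝ) (c : Zn n → ℂ) : ℝ≥0∞ := hsNormSq s c ^ (1/2 : ℝ)

/-- Squared L_s^{2,2}(X_{d,n}; w) norm (possibly infinite). -/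
def dataNormSq {d n : ℕ} (s : ℝ) (w : Zn n → Gr d n → ℝ) (g : Gr d n → Zn n → ℂ) : ℝ≥0∞ :=
  ∑' A : Gr d n, ∑' k : Zn n, ENNReal.ofReal (jap k ^ (2*s) * (w k A)^2 * ‖g A k‖^2)

/-- L_s^{2,2}(X_{d,n}; w) norm (possibly infinite). -/
def dataNorm {d n : ℕ} (s : ℝ) (w : Zn n → Gr d n → ℝ) (g : Gr d n → Zn n → ℂ) : ℝ≥0∞ :=
  dataNormSq s w g ^ (1/2 : ℝ)

/-- `W_k = Σ_{A ∈ Ω_k} w(k,A)²`. -/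
def Wk {d n : ℕ} (w : Zn n → Gr d n → ℝ) (k : Zn n) : ℝ :=
  ∑' A : {A : Gr d n // perp k A}, (w k A.1)^2

/-- The adjoint `R_d^*`: `(R_d^* g)^(k) = Σ_{A ∈ Ω_k} w(k,A)² ĝ(k,A)`. -/
def radonStar {d n : ℕ} (w : Zn n → Gr d n → ℝ) (g : Gr d n → Zn n → ℂ) : Zn n → ℂ :=
  fun k => ∑' A : {A : Gr d n // perp k A}, ((w k A.1 : ℝ) : ℂ)^2 * g A.1 k

/-- Symbol of the Fourier multiplier `P_{w,z}^α`:
`p_{w,z}^α(k) = 1/(W_k + α⟨k⟩^{2z})`. -/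
def pSymb {d n : ℕ} (w : Zn n → Gr d n → ℝ) (z α : ℝ) (k : Zn n) : ℝ :=
  (Wk w k + α * jap k ^ (2*z))⁻¹

/-- The Tikhonov-regularized reconstruction `P_{w,z}^α R_d^* g`. -/
def tikhRecon {d n : ℕ} (w : Zn n → Gr d n → ℝ) (z α : ℝ)
    (g : Gr d n → Zn n → ℂ) : Zn n → ℂ :=
  fun k => ((pSymb w z α k : ℝ) : ℂ) * radonStar w g k

/-- The constant `C(x) = x (x⁻¹ − 1)^{1−x}`. -/
def Cconst (x : ℝ) : ℝ := x * (x⁻¹ - 1) ^ (1 - x)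

/-!
On the Fourier side the reconstruction error splits as
`(P R^*(R f + g) - f)^(k) = -α⟨k⟩^{2s} / (W_k + α⟨k⟩^{2s}) · f̂(k) + (P R^* g)^(k)`.
Weighted AM-GM bounds the symbol of the first (bias) term by a multiple of `⟨k⟩^δ`, so it maps
`H^{r+δ}` to `H^r`. In the second (noise) term `R^*` maps the data space `L_t^{2,2}` to `H^t` with
norm at most `C_w` by Cauchy-Schwarz, and `P` gains `2s` derivatives at the cost of a factor `1/α`.
-/

section ExtendedNonnegativeSums

variable {ι : Type*}

theorem tsum_mul_le_Lp_mul_Lq_ennreal {p q : ℝ} (hpq : p.HolderConjugate q) (f g : ι → ℝ≥0∞) :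
    ∑' i, f i * g i ≤ (∑' i, f i ^ p) ^ (1 / p) * (∑' i, g i ^ q) ^ (1 / q) := by
  let _ : MeasurableSpace ι := ⊤
  simpa [lintegral_count] using ENNReal.lintegral_mul_le_Lp_mul_Lq Measure.count hpq
    (measurable_from_top (f := f)).aemeasurable (measurable_from_top (f := g)).aemeasurable

theorem Lp_add_le_tsum_ennreal {p : ℝ} (hp : 1 ≤ p) (f g : ι → ℝ≥0∞) :
    (∑' i, (f i + g i) ^ p) ^ (1 / p) ≤
      (∑' i, f i ^ p) ^ (1 / p) + (∑' i, g i ^ p) ^ (1 / p) := by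
  let _ : MeasurableSpace ι := ⊤
  simpa [lintegral_count] using ENNReal.lintegral_Lp_add_le (μ := Measure.count)
    (measurable_from_top (f := f)).aemeasurable (measurable_from_top (f := g)).aemeasurable hp

theorem rpow_half_le_mul_of_le_sq_mul {K a b : ℝ≥0∞} (h : a ≤ K ^ 2 * b) :
    a ^ (1 / 2 : ℝ) ≤ K * b ^ (1 / 2 : ℝ) := by
  calc a ^ (1 / 2 : ℝ)
    _ ≤ (K ^ 2 * b) ^ (1 / 2 : ℝ) := by gcongr
    _ = K * b ^ (1 / 2 : ℝ) := by
      rw [ENNReal.mul_rpow_of_nonneg _ _ (by norm_num), ← ENNReal.rpow_two, ← ENNReal.rpow_mul]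
      norm_num

theorem sq_tsum_mul_le_ennreal (f g : ι → ℝ≥0∞) :
    (∑' i, f i * g i) ^ 2 ≤ (∑' i, f i ^ 2) * ∑' i, g i ^ 2 := by
  have holder := tsum_mul_le_Lp_mul_Lq_ennreal Real.HolderConjugate.two_two f g
  simp only [ENNReal.rpow_two] at holder
  refine (pow_le_pow_left' holder 2).trans_eq ?_
  rw [← ENNReal.rpow_two, ← ENNReal.mul_rpow_of_nonneg _ _ (by norm_num), ← ENNReal.rpow_mul]
  norm_num

theorem sq_tsum_enorm_sq_mul_le (w : ι → ℝ) (g : ι → ℂ) :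
    (∑' i, ‖(w i : ℂ) ^ 2 * g i‖ₑ) ^ 2 ≤ (∑' i, ‖w i‖ₑ ^ 2) * ∑' i, (‖w i‖ₑ * ‖g i‖ₑ) ^ 2 := by
  have term_eq (i : ι) : ‖(w i : ℂ) ^ 2 * g i‖ₑ = ‖w i‖ₑ * (‖w i‖ₑ * ‖g i‖ₑ) := by
    rw [enorm_mul, enorm_pow, ← mul_assoc, ← sq]
    simp only [← ofReal_norm, Complex.norm_real]
  simp only [term_eq]
  exact sq_tsum_mul_le_ennreal _ _

end ExtendedNonnegativeSums

section Sobolev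

variable {n : ℕ}

theorem one_le_jap (k : Zn n) : 1 ≤ jap k :=
  Real.one_le_sqrt.2 (le_add_of_nonneg_right (Finset.sum_nonneg fun _ _ => sq_nonneg _))

theorem jap_pos (k : Zn n) : 0 < jap k :=
  one_pos.trans_le (one_le_jap k)

theorem jap_rpow_pos (k : Zn n) (s : ℝ) : 0 < jap k ^ s :=
  Real.rpow_pos_of_pos (jap_pos k) s

theorem ofReal_jap_rpow_two_mul (k : Zn n) (s : ℝ) :
    ENNReal.ofReal (jap k ^ (2 * s)) = ENNReal.ofReal (jap k ^ s) ^ 2 := by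
  rw [← ENNReal.ofReal_pow (jap_rpow_pos k s).le, mul_comm, Real.rpow_mul (jap_pos k).le,
    Real.rpow_two]

theorem hsNorm_eq_tsum_sq (s : ℝ) (c : Zn n → ℂ) :
    hsNorm s c = (∑' k, (ENNReal.ofReal (jap k ^ s) * ‖c k‖ₑ) ^ 2) ^ (1 / 2 : ℝ) := by
  rw [hsNorm, hsNormSq]
  congr 1
  refine tsum_congr fun k => ?_
  rw [ENNReal.ofReal_mul (jap_rpow_pos k _).le, ofReal_jap_rpow_two_mul,
    ENNReal.ofReal_pow (norm_nonneg _), ofReal_norm, mul_pow]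

theorem hsNorm_add_le (s : ℝ) (b c : Zn n → ℂ) : hsNorm s (b + c) ≤ hsNorm s b + hsNorm s c := by
  have minkowski := Lp_add_le_tsum_ennreal one_le_two
    (fun k => ENNReal.ofReal (jap k ^ s) * ‖b k‖ₑ) (fun k => ENNReal.ofReal (jap k ^ s) * ‖c k‖ₑ)
  simp only [ENNReal.rpow_two, ← mul_add] at minkowski
  simp only [hsNorm_eq_tsum_sq]
  refine le_trans ?_ minkowski
  gcongr with k
  exact enorm_add_le _ _

theorem hsNorm_mul_le {r δ K : ℝ} {m : Zn n → ℂ} (hm : ∀ k, ‖m k‖ ≤ K * jap k ^ δ)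
    (c : Zn n → ℂ) : hsNorm r (m * c) ≤ ENNReal.ofReal K * hsNorm (r + δ) c := by
  simp only [hsNorm_eq_tsum_sq]
  refine rpow_half_le_mul_of_le_sq_mul ?_
  rw [← ENNReal.tsum_mul_left]
  refine ENNReal.tsum_le_tsum fun k => ?_
  have symbol_le : ‖m k‖ₑ ≤ ENNReal.ofReal K * ENNReal.ofReal (jap k ^ δ) := by
    rw [← ENNReal.ofReal_mul' (jap_rpow_pos k δ).le, ← ofReal_norm]
    exact ENNReal.ofReal_le_ofReal (hm k)
  calc (ENNReal.ofReal (jap k ^ r) * ‖m k * c k‖ₑ) ^ 2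
    _ = (ENNReal.ofReal (jap k ^ r) * (‖m k‖ₑ * ‖c k‖ₑ)) ^ 2 := by rw [enorm_mul]
    _ ≤ (ENNReal.ofReal (jap k ^ r) *
          (ENNReal.ofReal K * ENNReal.ofReal (jap k ^ δ) * ‖c k‖ₑ)) ^ 2 := by gcongr
    _ = ENNReal.ofReal K ^ 2 * (ENNReal.ofReal (jap k ^ (r + δ)) * ‖c k‖ₑ) ^ 2 := by
      rw [Real.rpow_add (jap_pos k), ENNReal.ofReal_mul (jap_rpow_pos k r).le]
      ring

theorem hsNorm_mono {r t : ℝ} (hrt : r ≤ t) (c : Zn n → ℂ) : hsNorm r c ≤ hsNorm t c := by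
  simp only [hsNorm_eq_tsum_sq]
  gcongr with k
  exact one_le_jap k

end Sobolev

section Radon

variable {n d : ℕ} {w : Zn n → Gr d n → ℝ}

theorem Wk_nonneg (w : Zn n → Gr d n → ℝ) (k : Zn n) : 0 ≤ Wk w k :=
  tsum_nonneg fun _ => sq_nonneg _

theorem tsum_enorm_weight_sq {k : Zn n}
    (hWsum : Summable fun A : {A : Gr d n // perp k A} => w k A.1 ^ 2) :
    ∑' A : {A : Gr d n // perp k A}, ‖w k A.1‖ₑ ^ 2 = ENNReal.ofReal (Wk w k) := by
  rw [Wk, ENNReal.ofReal_tsum_of_nonneg (fun _ => sq_nonneg _) hWsum]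
  refine tsum_congr fun A => ?_
  rw [← sq_abs, ENNReal.ofReal_pow (abs_nonneg _), Real.enorm_eq_ofReal_abs]

theorem dataNormSq_eq_tsum_frequency (t : ℝ) (w : Zn n → Gr d n → ℝ) (g : Gr d n → Zn n → ℂ) :
    dataNormSq t w g =
      ∑' k, ENNReal.ofReal (jap k ^ t) ^ 2 * ∑' A, (‖w k A‖ₑ * ‖g A k‖ₑ) ^ 2 := by
  rw [dataNormSq, ENNReal.tsum_comm]
  refine tsum_congr fun k => ?_
  rw [← ENNReal.tsum_mul_left]
  refine tsum_congr fun A => ?_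
  rw [mul_assoc, ENNReal.ofReal_mul (jap_rpow_pos k _).le, ofReal_jap_rpow_two_mul, ← sq_abs,
    ← mul_pow, ENNReal.ofReal_pow (by positivity), ENNReal.ofReal_mul (abs_nonneg _),
    Real.enorm_eq_ofReal_abs, ofReal_norm]

theorem sq_tsum_enorm_radonStar_term_le {k : Zn n}
    (hWsum : Summable fun A : {A : Gr d n // perp k A} => w k A.1 ^ 2) (g : Gr d n → Zn n → ℂ) :
    (∑' A : {A : Gr d n // perp k A}, ‖(w k A.1 : ℂ) ^ 2 * g A.1 k‖ₑ) ^ 2 ≤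
      ENNReal.ofReal (Wk w k) * ∑' A, (‖w k A‖ₑ * ‖g A k‖ₑ) ^ 2 := by
  rw [← tsum_enorm_weight_sq hWsum]
  refine (sq_tsum_enorm_sq_mul_le _ _).trans ?_
  gcongr
  exact ENNReal.tsum_comp_le_tsum_of_injective Subtype.val_injective
    fun A => (‖w k A‖ₑ * ‖g A k‖ₑ) ^ 2

theorem hsNorm_radonStar_le {Cw : ℝ} (hCw : 0 ≤ Cw)
    (hWsum : ∀ k : Zn n, Summable fun A : {A : Gr d n // perp k A} => w k A.1 ^ 2)
    (hWub : ∀ k, Wk w k ≤ Cw ^ 2) (t : ℝ) (g : Gr d n → Zn n → ℂ) :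
    hsNorm t (radonStar w g) ≤ ENNReal.ofReal Cw * dataNorm t w g := by
  rw [hsNorm_eq_tsum_sq, dataNorm]
  refine rpow_half_le_mul_of_le_sq_mul ?_
  rw [dataNormSq_eq_tsum_frequency, ← ENNReal.tsum_mul_left]
  refine ENNReal.tsum_le_tsum fun k => ?_
  have star_le : ‖radonStar w g k‖ₑ ^ 2 ≤
      ENNReal.ofReal Cw ^ 2 * ∑' A, (‖w k A‖ₑ * ‖g A k‖ₑ) ^ 2 := by
    calc ‖radonStar w g k‖ₑ ^ 2
      _ ≤ (∑' A : {A : Gr d n // perp k A}, ‖(w k A.1 : ℂ) ^ 2 * g A.1 k‖ₑ) ^ 2 := by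
        gcongr
        exact enorm_tsum_le_tsum_enorm
      _ ≤ ENNReal.ofReal (Wk w k) * ∑' A, (‖w k A‖ₑ * ‖g A k‖ₑ) ^ 2 :=
        sq_tsum_enorm_radonStar_term_le (hWsum k) g
      _ ≤ _ := by
        rw [← ENNReal.ofReal_pow hCw]
        gcongr
        exact hWub k
  rw [mul_pow, mul_left_comm]
  gcongr

theorem summable_radonStar_term {t : ℝ} {g : Gr d n → Zn n → ℂ} {k : Zn n}
    (hWsum : Summable fun A : {A : Gr d n // perp k A} => w k A.1 ^ 2)
    (hg : dataNorm t w g ≠ ∞) :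
    Summable fun A : {A : Gr d n // perp k A} => (w k A.1 : ℂ) ^ 2 * g A.1 k := by
  have dataNormSq_ne_top : dataNormSq t w g ≠ ∞ := fun h => hg <| by
    rw [dataNorm, h, ENNReal.top_rpow_of_pos (by norm_num)]
  rw [dataNormSq_eq_tsum_frequency] at dataNormSq_ne_top
  have frequency_ne_top : ∑' A, (‖w k A‖ₑ * ‖g A k‖ₑ) ^ 2 ≠ ∞ := by
    have := ENNReal.ne_top_of_tsum_ne_top dataNormSq_ne_top k
    contrapose! this
    simp [this, jap_rpow_pos k t]
  have sq_ne_top := ne_top_of_le_ne_top (ENNReal.mul_ne_top ENNReal.ofReal_ne_top frequency_ne_top)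
    (sq_tsum_enorm_radonStar_term_le hWsum g)
  exact .of_enorm fun h => sq_ne_top (by rw [h, ENNReal.top_pow two_ne_zero])

theorem radonStar_radonC_add {g : Gr d n → Zn n → ℂ} {k : Zn n}
    (hWsum : Summable fun A : {A : Gr d n // perp k A} => w k A.1 ^ 2)
    (hg : Summable fun A : {A : Gr d n // perp k A} => (w k A.1 : ℂ) ^ 2 * g A.1 k)
    (c : Zn n → ℂ) :
    radonStar w (fun A k' => radonC A c k' + g A k') k = Wk w k * c k + radonStar w g k := by
  have weight_hasSum : HasSum (fun A : {A : Gr d n // perp k A} => (w k A.1 : ℂ) ^ 2 * c k)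
      (Wk w k * c k) := by
    simpa [Wk] using (Complex.hasSum_ofReal.2 hWsum.hasSum).mul_right (c k)
  have radonC_eq (A : {A : Gr d n // perp k A}) : radonC A.1 c k = c k := if_pos A.2
  simp only [radonStar, radonC_eq, mul_add]
  exact (weight_hasSum.add hg.hasSum).tsum_eq

end Radon

section InterpolationConstant

theorem Cconst_eq_rpow_mul_rpow {θ : ℝ} (hθ0 : 0 < θ) (hθ1 : θ ≤ 1) :
    Cconst θ = θ ^ θ * (1 - θ) ^ (1 - θ) := by
  have inv_sub_one : θ⁻¹ - 1 = (1 - θ) / θ := by field_simp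
  have rpow_split : θ ^ θ * θ ^ (1 - θ) = θ := by rw [← Real.rpow_add hθ0]; simp
  rw [Cconst, inv_sub_one, Real.div_rpow (sub_nonneg.2 hθ1) hθ0.le]
  nth_rw 1 [← rpow_split]
  have := (Real.rpow_pos_of_pos hθ0 (1 - θ)).ne'
  field_simp

theorem rpow_mul_rpow_le_Cconst_mul_add {θ a b : ℝ} (hθ0 : 0 < θ) (hθ1 : θ ≤ 1) (ha : 0 ≤ a)
    (hb : 0 ≤ b) : a ^ θ * b ^ (1 - θ) ≤ Cconst θ * (a + b) := by
  rcases hθ1.eq_or_lt with rfl | hθ1'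
  · simpa [Cconst] using hb
  have hθ' : 0 < 1 - θ := sub_pos.2 hθ1'
  have amGM := Real.geom_mean_le_arith_mean2_weighted hθ0.le hθ'.le (div_nonneg ha hθ0.le)
    (div_nonneg hb hθ'.le) (by ring)
  rw [mul_div_cancel₀ a hθ0.ne', mul_div_cancel₀ b hθ'.ne', Real.div_rpow ha hθ0.le,
    Real.div_rpow hb hθ'.le, div_mul_div_comm, div_le_iff₀ (by positivity)] at amGM
  rwa [Cconst_eq_rpow_mul_rpow hθ0 hθ1, mul_comm _ (a + b)]

theorem div_add_le_div_rpow_mul_Cconst {θ a x : ℝ} (hθ0 : 0 < θ) (hθ1 : θ ≤ 1) (ha : 0 < a)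
    (hx : 0 < x) : x / (a + x) ≤ (x / a) ^ θ * Cconst θ := by
  rw [div_le_iff₀ (add_pos ha hx)]
  have rpow_split : x ^ θ * x ^ (1 - θ) = x := by rw [← Real.rpow_add hx]; simp
  calc x = (x / a) ^ θ * (a ^ θ * x ^ (1 - θ)) := by
        rw [← mul_assoc, ← Real.mul_rpow (by positivity) ha.le, div_mul_cancel₀ x ha.ne',
          rpow_split]
    _ ≤ (x / a) ^ θ * (Cconst θ * (a + x)) := by
        gcongr ?_ * ?_
        exact rpow_mul_rpow_le_Cconst_mul_add hθ0 hθ1 ha.le hx.le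
    _ = (x / a) ^ θ * Cconst θ * (a + x) := by ring

end InterpolationConstant

section Tikhonov

variable {n d : ℕ} {w : Zn n → Gr d n → ℝ} {s α : ℝ}

/-- The symbol `-α⟨k⟩^{2z} / (W_k + α⟨k⟩^{2z})` of `P_{w,z}^α R_d^* R_d - 1`, the error that
Tikhonov regularization makes on exact data. -/
def biasSymb (w : Zn n → Gr d n → ℝ) (z α : ℝ) (k : Zn n) : ℝ :=
  -(α * jap k ^ (2 * z) * pSymb w z α k)

theorem Wk_add_pos (w : Zn n → Gr d n → ℝ) (s : ℝ) (hα : 0 < α) (k : Zn n) :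
    0 < Wk w k + α * jap k ^ (2 * s) :=
  add_pos_of_nonneg_of_pos (Wk_nonneg w k) (mul_pos hα (jap_rpow_pos k _))

theorem tikhRecon_radonC_add_sub {g : Gr d n → Zn n → ℂ} {k : Zn n} (hα : 0 < α)
    (hWsum : Summable fun A : {A : Gr d n // perp k A} => w k A.1 ^ 2)
    (hg : Summable fun A : {A : Gr d n // perp k A} => (w k A.1 : ℂ) ^ 2 * g A.1 k)
    (c : Zn n → ℂ) :
    tikhRecon w s α (fun A k' => radonC A c k' + g A k') k - c k =
      (biasSymb w s α k : ℂ) * c k + tikhRecon w s α g k := by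
  have symbol_mul : (pSymb w s α k : ℂ) * (Wk w k + ((α * jap k ^ (2 * s) : ℝ) : ℂ)) = 1 :=
    mod_cast inv_mul_cancel₀ (Wk_add_pos w s hα k).ne'
  simp only [tikhRecon]
  rw [radonStar_radonC_add hWsum hg, biasSymb, Complex.ofReal_neg,
    Complex.ofReal_mul (α * jap k ^ (2 * s))]
  linear_combination c k * symbol_mul

theorem norm_pSymb_le (w : Zn n → Gr d n → ℝ) (s : ℝ) (hα : 0 < α) (k : Zn n) :
    ‖(pSymb w s α k : ℂ)‖ ≤ α⁻¹ * jap k ^ (-(2 * s)) := by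
  have := mul_pos hα (jap_rpow_pos k (2 * s))
  rw [Complex.norm_real, pSymb, Real.norm_of_nonneg (inv_nonneg.2 (Wk_add_pos w s hα k).le),
    Real.rpow_neg (jap_pos k).le, ← mul_inv]
  exact inv_anti₀ this (le_add_of_nonneg_left (Wk_nonneg w k))

theorem hsNorm_tikhRecon_le {Cw r t : ℝ} (hCw : 0 ≤ Cw) (hα : 0 < α)
    (hWsum : ∀ k : Zn n, Summable fun A : {A : Gr d n // perp k A} => w k A.1 ^ 2)
    (hWub : ∀ k, Wk w k ≤ Cw ^ 2) (hrts : r ≤ 2 * s + t) (g : Gr d n → Zn n → ℂ) :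
    hsNorm r (tikhRecon w s α g) ≤ ENNReal.ofReal (Cw / α) * dataNorm t w g := by
  calc hsNorm r (tikhRecon w s α g)
    _ ≤ ENNReal.ofReal α⁻¹ * hsNorm (r + -(2 * s)) (radonStar w g) :=
      hsNorm_mul_le (norm_pSymb_le w s hα) _
    _ ≤ ENNReal.ofReal α⁻¹ * hsNorm t (radonStar w g) := by
      gcongr
      exact hsNorm_mono (by linarith) _
    _ ≤ ENNReal.ofReal α⁻¹ * (ENNReal.ofReal Cw * dataNorm t w g) := by
      gcongr
      exact hsNorm_radonStar_le hCw hWsum hWub t g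
    _ = ENNReal.ofReal (Cw / α) * dataNorm t w g := by
      rw [← mul_assoc, ← ENNReal.ofReal_mul (inv_nonneg.2 hα.le), inv_mul_eq_div]

theorem norm_biasSymb_le {cw δ : ℝ} {k : Zn n} (hcw : 0 < cw) (hα : 0 < α)
    (hWlb : cw ^ 2 ≤ Wk w k) (hδ0 : 0 < δ) (hδ2s : δ ≤ 2 * s) :
    ‖(biasSymb w s α k : ℂ)‖ ≤
      α ^ (δ / (2 * s)) * cw ^ (-(δ / s)) * Cconst (δ / (2 * s)) * jap k ^ δ := by
  have hs : 0 < s := by linarith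
  have hx := mul_pos hα (jap_rpow_pos k (2 * s))
  have power_eq : (α * jap k ^ (2 * s) / cw ^ 2) ^ (δ / (2 * s)) =
      α ^ (δ / (2 * s)) * cw ^ (-(δ / s)) * jap k ^ δ := by
    rw [Real.div_rpow hx.le (by positivity), Real.mul_rpow hα.le (jap_rpow_pos k _).le,
      ← Real.rpow_mul (jap_pos k).le, ← Real.rpow_two cw, ← Real.rpow_mul hcw.le,
      mul_div_cancel₀ δ (by positivity), show 2 * (δ / (2 * s)) = δ / s by field_simp,
      Real.rpow_neg hcw.le]
    ring
  rw [Complex.norm_real, biasSymb, norm_neg, pSymb, ← div_eq_mul_inv,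
    Real.norm_of_nonneg (div_pos hx (Wk_add_pos w s hα k)).le]
  calc α * jap k ^ (2 * s) / (Wk w k + α * jap k ^ (2 * s))
    _ ≤ α * jap k ^ (2 * s) / (cw ^ 2 + α * jap k ^ (2 * s)) := by gcongr
    _ ≤ (α * jap k ^ (2 * s) / cw ^ 2) ^ (δ / (2 * s)) * Cconst (δ / (2 * s)) :=
      div_add_le_div_rpow_mul_Cconst (by positivity) (div_le_one_of_le₀ hδ2s (by positivity))
        (by positivity) hx
    _ = _ := by rw [power_eq]; ring

end Tikhonov

theorem statement9_general {n d : ℕ} {w : Zn n → Gr d n → ℝ} {cw Cw r t s δ α : ℝ}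
    (hcw : 0 < cw) (hCw : 0 ≤ Cw)
    (hWsum : ∀ k : Zn n, Summable fun A : {A : Gr d n // perp k A} => w k A.1 ^ 2)
    (hWlb : ∀ k, cw ^ 2 ≤ Wk w k) (hWub : ∀ k, Wk w k ≤ Cw ^ 2)
    (hrts : r ≤ 2 * s + t) (hδ0 : 0 < δ) (hδ2s : δ ≤ 2 * s) (hα : 0 < α)
    (c : Zn n → ℂ) {g : Gr d n → Zn n → ℂ} (hg : dataNorm t w g ≠ ∞) :
    hsNorm r (fun k => tikhRecon w s α (fun A k' => radonC A c k' + g A k') k - c k) ≤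
      ENNReal.ofReal (α ^ (δ / (2 * s)) * cw ^ (-(δ / s)) * Cconst (δ / (2 * s)))
          * hsNorm (r + δ) c
        + ENNReal.ofReal (Cw / α) * dataNorm t w g := by
  have error_eq : (fun k => tikhRecon w s α (fun A k' => radonC A c k' + g A k') k - c k) =
      (fun k => (biasSymb w s α k : ℂ)) * c + tikhRecon w s α g :=
    funext fun k => tikhRecon_radonC_add_sub hα (hWsum k) (summable_radonStar_term (hWsum k) hg) c
  rw [error_eq]
  exact (hsNorm_add_le r _ _).trans <| add_le_add
    (hsNorm_mul_le (fun k => norm_biasSymb_le hcw hα (hWlb k) hδ0 hδ2s) c)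
    (hsNorm_tikhRecon_le hCw hα hWsum hWub hrts g)

theorem ofReal_div_mul_le_ofReal_pow_three_mul {c C ε α : ℝ} {N : ℝ≥0∞} (hc : 0 < c) (hC : 0 ≤ C)
    (hcC : c ^ 2 ≤ C ^ 2) (hε : 0 ≤ ε) (hα : 0 < α) (hN : N ≤ ENNReal.ofReal ε) :
    ENNReal.ofReal (C / α) * N ≤ ENNReal.ofReal (C ^ 3 * (c ^ 2)⁻¹ * (ε / α)) := by
  refine (mul_le_mul_right hN _).trans ?_
  rw [← ENNReal.ofReal_mul (by positivity)]
  refine ENNReal.ofReal_le_ofReal ?_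
  have one_le : 1 ≤ C ^ 2 * (c ^ 2)⁻¹ := by
    rwa [← div_eq_mul_inv, one_le_div (by positivity)]
  calc C / α * ε = 1 * (C * (ε / α)) := by ring
    _ ≤ C ^ 2 * (c ^ 2)⁻¹ * (C * (ε / α)) := by gcongr
    _ = C ^ 3 * (c ^ 2)⁻¹ * (ε / α) := by ring

/-- Quantitative convergence rate for the Tikhonov
regularization. If `2s + t ≥ r`, `s > 0`, `0 < δ < 2s`, `f ∈ H^{r+δ}(𝕋ⁿ)`,
`‖g‖_{L_t^{2,2}(X_{d,n};w)} ≤ ε` and `0 < α ≤ c_w²(2s/δ − 1)`, then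
`‖P_{w,s}^α R_d^*(R_d f + g) − f‖_{H^r} ≤
  α^{δ/2s} c_w^{−δ/s} C(δ/2s) ‖f‖_{H^{r+δ}} + C_w³ c_w^{−2} ε/α`. -/
theorem statement9 {n d : ℕ} (hn : 2 ≤ n) (hd1 : 1 ≤ d) (hd2 : d ≤ n - 1)
    (w : Zn n → Gr d n → ℝ) (hw : IsWeight w) (cw Cw : ℝ) (hcw : 0 < cw) (hCw : 0 < Cw)
    (hWsum : ∀ k : Zn n, Summable (fun A : {A : Gr d n // perp k A} => (w k A.1) ^ 2))
    (hWlb : ∀ k : Zn n, cw ^ 2 ≤ Wk w k) (hWub : ∀ k : Zn n, Wk w k ≤ Cw ^ 2)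
    (r t s δ : ℝ) (hrts : r ≤ 2*s + t) (hs : 0 < s) (hδ0 : 0 < δ) (hδ2s : δ < 2*s)
    (f : PDist n) (hf : hsNormSq (r + δ) f.coef < ∞)
    (ε : ℝ) (hε : 0 < ε)
    (g : Gr d n → PDist n) (hg : dataNorm t w (fun A => (g A).coef) ≤ ENNReal.ofReal ε)
    (α : ℝ) (hα0 : 0 < α) (hαle : α ≤ cw ^ 2 * (2*s/δ - 1)) :
    hsNorm r (fun k : Zn n =>
        tikhRecon w s α (fun A k' => radonC A f.coef k' + (g A).coef k') k - f.coef k)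
      ≤ ENNReal.ofReal (α ^ (δ / (2*s)) * cw ^ (-(δ / s)) * Cconst (δ / (2*s)))
          * hsNorm (r + δ) f.coef
        + ENNReal.ofReal (Cw ^ 3 * (cw ^ 2)⁻¹ * (ε / α)) := by
  have hgTop := ne_top_of_le_ne_top ENNReal.ofReal_ne_top hg
  have noise_le := ofReal_div_mul_le_ofReal_pow_three_mul hcw hCw.le ((hWlb 0).trans (hWub 0))
    hε.le hα0 hg
  exact (statement9_general hcw hCw.le hWsum hWlb hWub hrts hδ0 hδ2s.le hα0 f.coef hgTop).trans
    (add_le_add_right noise_le _)
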